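/- The set S has Lebesgue measure zero. -/

import Mathlib

open Filter

/-- The `Q_s`-value of a digit sequence. -/
noncomputable def qsVal (q : ℕ → ℝ) (a : ℕ → ℕ) : ℝ :=
  ∑' k : ℕ, (∑ i ∈ Finset.range (a k), q i) * ∏ j ∈ Finset.range k, q (a j)

/-- The set `S` of real numbers that are `Q_s`-values of digit sequences whose
asymptotic mean of digits does not exist. -/
noncomputable def Sset (s : ℕ) (q : ℕ → ℝ) : Set ℝ :=
  {x | ∃ a : ℕ → ℕ, (∀ n, a n < s) ∧ x = qsVal q a ∧
    ¬ ∃ L : ℝ, Filter.Tendsto (fun n => (∑ i ∈ Finset.range n, (a i : ℝ)) / n)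
      Filter.atTop (nhds L)}

/-- cumulative sums -/
noncomputable def qsB (q : ℕ → ℝ) (k : ℕ) : ℝ := ∑ i ∈ Finset.range k, q i

open Classical in
/-- first digit -/
noncomputable def qsD (s : ℕ) (q : ℕ → ℝ) (x : ℝ) : ℕ :=
  Nat.findGreatest (fun k => qsB q k ≤ x) (s - 1)

/-- shift map -/
noncomputable def qsT (s : ℕ) (q : ℕ → ℝ) (x : ℝ) : ℝ :=
  (x - qsB q (qsD s q x)) / q (qsD s q x)

/-- Lebesgue measure on the unit interval -/
noncomputable def qsM : MeasureTheory.Measure ℝ :=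
  MeasureTheory.volume.restrict (Set.Ico 0 1)

section
variable {s : ℕ} {q : ℕ → ℝ}

lemma qsB_succ (k : ℕ) : qsB q (k + 1) = qsB q k + q k := Finset.sum_range_succ _ _

lemma qsB_mono (hq : ∀ i < s, 0 < q i) {m n : ℕ} (h : m ≤ n) (hn : n ≤ s) :
    qsB q m ≤ qsB q n := by
  apply Finset.sum_le_sum_of_subset_of_nonneg (Finset.range_mono h)
  intro i hi _
  exact (hq i (by have := Finset.mem_range.1 hi; omega)).le

lemma qsB_zero : qsB q 0 = 0 := by simp [qsB]

lemma qsD_lt (hs : 2 ≤ s) (x : ℝ) : qsD s q x < s := by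
  classical
  have : qsD s q x ≤ s - 1 := Nat.findGreatest_le _
  omega

lemma qsD_eq (hq : ∀ i < s, 0 < q i) {x : ℝ} {k : ℕ} (hk : k < s)
    (h1 : qsB q k ≤ x) (h2 : x < qsB q (k + 1)) : qsD s q x = k := by
  classical
  unfold qsD
  rw [Nat.findGreatest_eq_iff]
  refine ⟨by omega, fun _ => h1, fun n hn hn' => ?_⟩
  have := qsB_mono hq (show k + 1 ≤ n from hn) (by omega)
  linarith

lemma qsD_spec (hs : 2 ≤ s) (hsum : ∑ i ∈ Finset.range s, q i = 1) {x : ℝ}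
    (hx : x ∈ Set.Ico (0 : ℝ) 1) :
    qsB q (qsD s q x) ≤ x ∧ x < qsB q (qsD s q x + 1) := by
  classical
  obtain ⟨h1, h2, h3⟩ := (Nat.findGreatest_eq_iff (P := fun k => qsB q k ≤ x) (k := s - 1)
    (m := qsD s q x)).1 rfl
  constructor
  · by_cases h : qsD s q x = 0
    · rw [h, qsB_zero]; exact hx.1
    · exact h2 h
  · by_cases h : qsD s q x = s - 1
    · rw [h, Nat.sub_add_cancel (by omega)]
      have : qsB q s = 1 := hsum
      rw [this]; exact hx.2
    · exact not_le.1 (h3 (Nat.lt_succ_self _) (by omega))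

lemma qsD_meas : Measurable (qsD s q) := by
  classical
  unfold qsD
  apply measurable_findGreatest
  intro k _
  exact measurableSet_Ici

lemma qsT_meas : Measurable (qsT s q) := by
  unfold qsT
  have h1 : Measurable (fun x => qsB q (qsD s q x)) := (measurable_of_countable (qsB q)).comp qsD_meas
  have h2 : Measurable (fun x => q (qsD s q x)) := (measurable_of_countable q).comp qsD_meas
  exact (measurable_id.sub h1).div h2

instance : MeasureTheory.IsProbabilityMeasure qsM := ⟨by simp [qsM]⟩

lemma qs_key (hs : 2 ≤ s) (hq : ∀ i < s, 0 < q i) (hsum : ∑ i ∈ Finset.range s, q i = 1)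
    {k : ℕ} (hk : k < s) {C : Set ℝ} (hC : MeasurableSet C) :
    qsM (qsD s q ⁻¹' {k} ∩ qsT s q ⁻¹' C) = ENNReal.ofReal (q k) * qsM C := by
  have hqk := hq k hk
  have hset : qsD s q ⁻¹' {k} ∩ qsT s q ⁻¹' C ∩ Set.Ico 0 1 =
      (fun x => x - qsB q k) ⁻¹' ((fun x => x * (q k)⁻¹) ⁻¹' (C ∩ Set.Ico 0 1)) := by
    ext x
    simp only [Set.mem_inter_iff, Set.mem_preimage, Set.mem_singleton_iff, ← div_eq_mul_inv]
    constructor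
    · rintro ⟨⟨h1, h2⟩, hx⟩
      obtain ⟨h3, h4⟩ := qsD_spec hs hsum hx
      unfold qsT at h2
      rw [h1] at h2 h3 h4
      rw [qsB_succ] at h4
      refine ⟨h2, div_nonneg (by linarith) hqk.le, ?_⟩
      rw [div_lt_one hqk]; linarith
    · rintro ⟨h1, h2, h3⟩
      rw [div_lt_one hqk] at h3
      have h2 : 0 ≤ x - qsB q k := by
        have := mul_nonneg h2 hqk.le
        rwa [div_mul_cancel₀ _ hqk.ne'] at this
      have hd : qsD s q x = k := qsD_eq hq hk (by linarith) (by rw [qsB_succ]; linarith)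
      refine ⟨⟨hd, ?_⟩, ?_, ?_⟩
      · unfold qsT; rwa [hd]
      · have := qsB_mono hq (Nat.zero_le k) hk.le
        rw [qsB_zero] at this; linarith
      · have := qsB_mono hq (show k + 1 ≤ s from hk) le_rfl
        have h1 : qsB q s = 1 := hsum
        rw [qsB_succ] at this; linarith
  unfold qsM
  rw [MeasureTheory.Measure.restrict_apply ((qsD_meas (measurableSet_singleton k)).inter (qsT_meas hC)),
    hset]
  simp only [sub_eq_add_neg]
  rw [MeasureTheory.measure_preimage_add_right, Real.volume_preimage_mul_right
      (inv_ne_zero hqk.ne'), inv_inv, abs_of_pos hqk, MeasureTheory.Measure.restrict_apply hC]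

lemma qs_split (hs : 2 ≤ s) (hq : ∀ i < s, 0 < q i) (hsum : ∑ i ∈ Finset.range s, q i = 1)
    (A : Set ℕ) {C : Set ℝ} (hC : MeasurableSet C) :
    qsM (qsD s q ⁻¹' A ∩ qsT s q ⁻¹' C) = qsM (qsD s q ⁻¹' A) * qsM C := by
  have hA : MeasurableSet A := MeasurableSet.of_discrete
  have : (qsM.restrict (qsT s q ⁻¹' C)).map (qsD s q) = (qsM C) • (qsM.map (qsD s q)) := by
    apply MeasureTheory.Measure.ext_of_singleton
    intro k
    rw [MeasureTheory.Measure.smul_apply,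
      MeasureTheory.Measure.map_apply qsD_meas (measurableSet_singleton k),
      MeasureTheory.Measure.map_apply qsD_meas (measurableSet_singleton k),
      MeasureTheory.Measure.restrict_apply (qsD_meas (measurableSet_singleton k))]
    by_cases hk : k < s
    · have h := qs_key hs hq hsum hk MeasurableSet.univ
      rw [MeasureTheory.measure_univ, Set.preimage_univ, Set.inter_univ, mul_one] at h
      rw [qs_key hs hq hsum hk hC, h, smul_eq_mul, mul_comm]
    · have : qsD s q ⁻¹' {k} = ∅ := by
        ext x
        simp only [Set.mem_preimage, Set.mem_singleton_iff, Set.mem_empty_iff_false, iff_false]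
        have := qsD_lt (q := q) hs x
        omega
      simp [this]
  have h := congrArg (fun m => m A) this
  simp only [MeasureTheory.Measure.smul_apply] at h
  rw [MeasureTheory.Measure.map_apply qsD_meas hA,
      MeasureTheory.Measure.map_apply qsD_meas hA,
      MeasureTheory.Measure.restrict_apply (qsD_meas hA), smul_eq_mul, mul_comm] at h
  exact h

lemma qs_mp (hs : 2 ≤ s) (hq : ∀ i < s, 0 < q i) (hsum : ∑ i ∈ Finset.range s, q i = 1) :
    MeasureTheory.MeasurePreserving (qsT s q) qsM qsM := by
  refine ⟨qsT_meas, ?_⟩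
  ext C hC
  rw [MeasureTheory.Measure.map_apply qsT_meas hC]
  simpa using qs_split hs hq hsum Set.univ hC

lemma qs_indep (hs : 2 ≤ s) (hq : ∀ i < s, 0 < q i) (hsum : ∑ i ∈ Finset.range s, q i = 1)
    {i j : ℕ} (hij : i < j) :
    ProbabilityTheory.IndepFun (fun x => qsD s q ((qsT s q)^[i] x))
      (fun x => qsD s q ((qsT s q)^[j] x)) qsM := by
  rw [ProbabilityTheory.indepFun_iff_measure_inter_preimage_eq_mul]
  intro A B hA hB
  obtain ⟨m, rfl⟩ : ∃ m, j = m + 1 + i := ⟨j - i - 1, by omega⟩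
  have mp := qs_mp hs hq hsum
  have hC : MeasurableSet ((qsT s q)^[m] ⁻¹' (qsD s q ⁻¹' B)) :=
    (qsT_meas.iterate m) (qsD_meas hB)
  have e1 : (fun x => qsD s q ((qsT s q)^[i] x)) ⁻¹' A = (qsT s q)^[i] ⁻¹' (qsD s q ⁻¹' A) := rfl
  have e2 : (fun x => qsD s q ((qsT s q)^[m + 1 + i] x)) ⁻¹' B =
      (qsT s q)^[i] ⁻¹' (qsT s q ⁻¹' ((qsT s q)^[m] ⁻¹' (qsD s q ⁻¹' B))) := by
    ext x
    simp only [Set.mem_preimage, Function.iterate_add_apply, Function.iterate_one]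
  rw [e1, e2, ← Set.preimage_inter,
    (mp.iterate i).measure_preimage ((qsD_meas hA).inter (qsT_meas hC)).nullMeasurableSet,
    (mp.iterate i).measure_preimage (qsD_meas hA).nullMeasurableSet,
    (mp.iterate i).measure_preimage (qsT_meas hC).nullMeasurableSet,
    qs_split hs hq hsum A hC, mp.measure_preimage hC.nullMeasurableSet]

lemma qs_slln (hs : 2 ≤ s) (hq : ∀ i < s, 0 < q i) (hsum : ∑ i ∈ Finset.range s, q i = 1) :
    ∀ᵐ x ∂qsM, ∃ L : ℝ, Tendsto (fun n : ℕ =>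
      (∑ i ∈ Finset.range n, (qsD s q ((qsT s q)^[i] x) : ℝ)) / n) atTop (nhds L) := by
  have hcast : Measurable (fun n : ℕ => (n : ℝ)) := measurable_of_countable _
  have hm : ∀ i, Measurable (fun x => (qsD s q ((qsT s q)^[i] x) : ℝ)) := fun i =>
    hcast.comp (qsD_meas.comp (qsT_meas.iterate i))
  have h := ProbabilityTheory.strong_law_ae_real (μ := qsM)
    (fun i x => (qsD s q ((qsT s q)^[i] x) : ℝ)) ?_ ?_ ?_
  · filter_upwards [h] with x hx
    exact ⟨_, hx⟩
  · refine MeasureTheory.Integrable.of_bound (hm 0).aestronglyMeasurable (s : ℝ)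
      (Filter.Eventually.of_forall fun x => ?_)
    simp only [Real.norm_natCast]
    exact_mod_cast (qsD_lt hs _).le
  · intro i j hij
    rcases lt_or_gt_of_ne hij with h | h
    · exact (qs_indep hs hq hsum h).comp hcast hcast
    · exact ((qs_indep hs hq hsum h).comp hcast hcast).symm
  · intro i
    refine ⟨(hm i).aemeasurable, (hm 0).aemeasurable, ?_⟩
    have mp := (qs_mp hs hq hsum).iterate i
    have h0 : Measurable (fun x => (qsD s q x : ℝ)) := hcast.comp qsD_meas
    have : (fun x => (qsD s q ((qsT s q)^[i] x) : ℝ)) =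
      (fun x => (qsD s q x : ℝ)) ∘ (qsT s q)^[i] := rfl
    rw [this, ← MeasureTheory.Measure.map_map h0 mp.measurable, mp.map_eq]
    rfl

lemma qs_partial (hq : ∀ i < s, 0 < q i) (hsum : ∑ i ∈ Finset.range s, q i = 1)
    {a : ℕ → ℕ} (ha : ∀ n, a n < s) (n : ℕ) :
    ∑ k ∈ Finset.range n, (qsB q (a k) * ∏ j ∈ Finset.range k, q (a j)) +
      ∏ j ∈ Finset.range n, q (a j) ≤ 1 := by
  induction n with
  | zero => simp
  | succ n ih =>
    rw [Finset.sum_range_succ, Finset.prod_range_succ]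
    have h1 := qsB_mono hq (show a n + 1 ≤ s from ha n) le_rfl
    have h2 : qsB q s = 1 := hsum
    rw [qsB_succ, h2] at h1
    have h3 : 0 ≤ ∏ j ∈ Finset.range n, q (a j) :=
      Finset.prod_nonneg fun j _ => (hq _ (ha j)).le
    nlinarith

lemma qs_term_nonneg (hq : ∀ i < s, 0 < q i)
    {a : ℕ → ℕ} (ha : ∀ n, a n < s) (k : ℕ) :
    0 ≤ qsB q (a k) * ∏ j ∈ Finset.range k, q (a j) := by
  refine mul_nonneg ?_ (Finset.prod_nonneg fun j _ => (hq _ (ha j)).le)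
  have := qsB_mono hq (Nat.zero_le (a k)) (ha k).le
  rwa [qsB_zero] at this

lemma qs_partial_le (hq : ∀ i < s, 0 < q i) (hsum : ∑ i ∈ Finset.range s, q i = 1)
    {a : ℕ → ℕ} (ha : ∀ n, a n < s) (n : ℕ) :
    ∑ k ∈ Finset.range n, (qsB q (a k) * ∏ j ∈ Finset.range k, q (a j)) ≤ 1 := by
  have := qs_partial hq hsum ha n
  have h3 : 0 ≤ ∏ j ∈ Finset.range n, q (a j) :=
      Finset.prod_nonneg fun j _ => (hq _ (ha j)).le
  linarith

lemma qs_summable (hq : ∀ i < s, 0 < q i) (hsum : ∑ i ∈ Finset.range s, q i = 1)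
    {a : ℕ → ℕ} (ha : ∀ n, a n < s) :
    Summable fun k => qsB q (a k) * ∏ j ∈ Finset.range k, q (a j) :=
  summable_of_sum_range_le (qs_term_nonneg hq ha) (qs_partial_le hq hsum ha)

lemma qsVal_nonneg (hq : ∀ i < s, 0 < q i)
    {a : ℕ → ℕ} (ha : ∀ n, a n < s) : 0 ≤ qsVal q a :=
  tsum_nonneg (qs_term_nonneg hq ha)

lemma qsVal_le (hq : ∀ i < s, 0 < q i) (hsum : ∑ i ∈ Finset.range s, q i = 1)
    {a : ℕ → ℕ} (ha : ∀ n, a n < s) : qsVal q a ≤ 1 :=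
  Real.tsum_le_of_sum_range_le (qs_term_nonneg hq ha) (qs_partial_le hq hsum ha)

lemma qsVal_rec (hq : ∀ i < s, 0 < q i) (hsum : ∑ i ∈ Finset.range s, q i = 1)
    {a : ℕ → ℕ} (ha : ∀ n, a n < s) :
    qsVal q a = qsB q (a 0) + q (a 0) * qsVal q (fun n => a (n + 1)) := by
  have h := (qs_summable hq hsum ha).tsum_eq_zero_add
  have e : qsVal q a = ∑' k, qsB q (a k) * ∏ j ∈ Finset.range k, q (a j) := rfl
  rw [e, h, Finset.prod_range_zero, mul_one]
  congr 1
  unfold qsVal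
  rw [← tsum_mul_left]
  congr 1
  ext k
  rw [Finset.prod_range_succ']
  unfold qsB
  ring

lemma qsVal_lt (hq : ∀ i < s, 0 < q i) (hsum : ∑ i ∈ Finset.range s, q i = 1) (n : ℕ) :
    ∀ {a : ℕ → ℕ}, (∀ n, a n < s) → a n + 1 < s → qsVal q a < 1 := by
  have h2 : qsB q s = 1 := hsum
  induction n with
  | zero =>
    intro a ha h
    have h1 := qsVal_le hq hsum (a := fun n => a (n + 1)) (fun n => ha _)
    rw [qsVal_rec hq hsum ha]
    have h3 := qsB_mono hq (show a 0 + 1 + 1 ≤ s from h) le_rfl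
    rw [qsB_succ, qsB_succ, h2] at h3
    have h4 := hq _ h
    have h5 := hq _ (ha 0)
    nlinarith
  | succ n ih =>
    intro a ha h
    have h1 := ih (a := fun n => a (n + 1)) (fun n => ha _) h
    rw [qsVal_rec hq hsum ha]
    have h3 := qsB_mono hq (show a 0 + 1 ≤ s from ha 0) le_rfl
    rw [qsB_succ, h2] at h3
    have h5 := hq _ (ha 0)
    nlinarith

lemma qsVal_step (hq : ∀ i < s, 0 < q i) (hsum : ∑ i ∈ Finset.range s, q i = 1)
    {a : ℕ → ℕ} (ha : ∀ n, a n < s) (h : ∃ n, a (n + 1) + 1 < s) :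
    qsD s q (qsVal q a) = a 0 ∧ qsT s q (qsVal q a) = qsVal q (fun n => a (n + 1)) := by
  obtain ⟨n, hn⟩ := h
  have h1 := qsVal_lt hq hsum n (a := fun n => a (n + 1)) (fun n => ha _) hn
  have h0 := qsVal_nonneg hq (a := fun n => a (n + 1)) (fun n => ha _)
  have h5 := hq _ (ha 0)
  have hr := qsVal_rec hq hsum ha
  have hd : qsD s q (qsVal q a) = a 0 := by
    apply qsD_eq hq (ha 0)
    · rw [hr]; nlinarith
    · rw [hr, qsB_succ]; nlinarith
  refine ⟨hd, ?_⟩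
  unfold qsT
  rw [hd, hr]
  field_simp
  ring

lemma qsVal_iter (hq : ∀ i < s, 0 < q i) (hsum : ∑ i ∈ Finset.range s, q i = 1)
    {a : ℕ → ℕ} (ha : ∀ n, a n < s) (h : ∀ N, ∃ n, a (n + N) + 1 < s) (m : ℕ) :
    (qsT s q)^[m] (qsVal q a) = qsVal q (fun n => a (n + m)) := by
  induction m with
  | zero => rfl
  | succ m ih =>
    rw [Function.iterate_succ_apply', ih]
    obtain ⟨n, hn⟩ := h (m + 1)
    have := (qsVal_step hq hsum (a := fun n => a (n + m)) (fun n => ha _)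
      ⟨n, by rwa [add_assoc, add_comm 1 m]⟩).2
    rw [this]
    congr 1
    ext n
    congr 1
    ring

lemma qsVal_digit (hq : ∀ i < s, 0 < q i) (hsum : ∑ i ∈ Finset.range s, q i = 1)
    {a : ℕ → ℕ} (ha : ∀ n, a n < s) (h : ∀ N, ∃ n, a (n + N) + 1 < s) (m : ℕ) :
    qsD s q ((qsT s q)^[m] (qsVal q a)) = a m := by
  rw [qsVal_iter hq hsum ha h]
  obtain ⟨n, hn⟩ := h (m + 1)
  have := (qsVal_step hq hsum (a := fun n => a (n + m)) (fun n => ha _)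
      ⟨n, by rwa [add_assoc, add_comm 1 m]⟩).1
  simpa using this

end

/-- The set `S` has Lebesgue measure zero. -/
theorem Sset_measure_zero (s : ℕ) (hs : 2 ≤ s) (q : ℕ → ℝ)
    (hq : ∀ i < s, 0 < q i) (hsum : ∑ i ∈ Finset.range s, q i = 1) :
    MeasureTheory.volume (Sset s q) = 0 := by
  have hae := qs_slln hs hq hsum
  unfold qsM at hae
  rw [MeasureTheory.ae_restrict_iff' measurableSet_Ico] at hae
  refine MeasureTheory.measure_mono_null ?_ hae
  rintro x ⟨a, ha, rfl, hno⟩ hx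
  have h : ∀ N, ∃ n, a (n + N) + 1 < s := by
    by_contra! hcon
    obtain ⟨N, hN⟩ := hcon
    apply hno
    have hc : Tendsto (fun n => (a n : ℝ)) atTop (nhds ((s - 1 : ℕ) : ℝ)) := by
      apply tendsto_const_nhds.congr'
      filter_upwards [eventually_ge_atTop N] with n hn
      have h1 := hN (n - N)
      rw [Nat.sub_add_cancel hn] at h1
      have h2 := ha n
      congr 1
      omega
    refine ⟨_, hc.cesaro.congr fun n => ?_⟩
    rw [div_eq_inv_mul]
  obtain ⟨n, hn⟩ := h 0
  have hx2 := hx ⟨qsVal_nonneg hq ha, qsVal_lt hq hsum n ha hn⟩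
  simp only [qsVal_digit hq hsum ha h] at hx2
  exact hno hx2
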